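/- Let R be a v-coherent integral domain. The following statements are equivalent: (1) for each nonempty set Λ of t-primes of R, Φ(Λ) is v-finite; (2) R satisfies the ascending chain condition on t-primes, and for each set Λ of pairwise incomparable t-primes of R, Φ(Λ) is v-finite. -/

import Mathlib

/-!
If `P₀ ≤ P₁ ≤ ⋯` is a chain of `t`-primes that does not stabilize, its union `P` is a `t`-ideal
contained in no `Pₙ`, so it lies in `Φ({Pₙ})`. A `v`-finite ideal `A_v ≤ P` with `A` finitely
generated has `A ≤ Pₙ` for some `n`, hence `A_v ≤ Pₙ`; so `Φ({Pₙ})` is not `v`-finite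
(`acc_of_phiVFinite`). The empty set of primes is handled by principal ideals, which are `v`-finite
`t`-ideals (`phiVFinite_empty`).

Conversely, under the ascending chain condition every member of `Λ` lies below a maximal member of
`Λ`, so the maximal members form a pairwise incomparable set `Λ'` with `Φ(Λ') = Φ(Λ)`.
-/

/-
Definitions following S. Gabelli, E. Houston, T. G. Lucas,
"The t#-property for integral domains".

All the star-operation notions (`v`, `t`, maximal `t`-ideals, etc.) are defined for a
commutative ring `R` via its total quotient field `FractionRing R`; in all theorems `R`
is assumed to be an integral domain, so `FractionRing R` is its quotient field `K`.
-/

noncomputable section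

namespace TSharpPaper

variable (R : Type*) [CommRing R]

/-- The image of an integral ideal in the quotient field, as an `R`-submodule. -/
def idealSub (I : Ideal R) : Submodule R (FractionRing R) :=
  Submodule.map (Algebra.linearMap R (FractionRing R)) I

/-- The divisorial closure `I_v = (I⁻¹)⁻¹` of an integral ideal, as an integral ideal.
Here for a submodule `J` of `K`, `1 / J = {x ∈ K : xJ ⊆ R}` is `J⁻¹`. -/
def vIdeal (I : Ideal R) : Ideal R :=
  Submodule.comap (Algebra.linearMap R (FractionRing R))
    ((1 : Submodule R (FractionRing R)) / (1 / idealSub R I))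

/-- The `t`-closure `I_t = ⋃ J_v`, the union over all nonzero finitely generated
subideals `J` of `I`. -/
def tIdeal (I : Ideal R) : Ideal R :=
  ⨆ (J : Ideal R) (_ : J.FG) (_ : J ≠ ⊥) (_ : J ≤ I), vIdeal R J

/-- A (nonzero) integral ideal is divisorial if `I = I_v`. -/
def IsDivisorialIdeal (I : Ideal R) : Prop := I ≠ ⊥ ∧ vIdeal R I = I

/-- A (nonzero) integral ideal is a `t`-ideal if `I = I_t`. -/
def IsTIdeal (I : Ideal R) : Prop := I ≠ ⊥ ∧ tIdeal R I = I

/-- A `t`-prime is a prime `t`-ideal. -/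
def IsTPrime (P : Ideal R) : Prop := P.IsPrime ∧ IsTIdeal R P

/-- The set `t-Max(R)` of maximal `t`-ideals: integral ideals maximal among proper
integral `t`-ideals. -/
def tMax : Set (Ideal R) :=
  {M | IsTIdeal R M ∧ M ≠ ⊤ ∧ ∀ J : Ideal R, IsTIdeal R J → J ≠ ⊤ → M ≤ J → J = M}

/-- The localization `R_P` of `R` at (the complement of) a prime `P`, viewed as a subset
of the quotient field. -/
def locSet (P : Ideal R) : Set (FractionRing R) :=
  {x | ∃ r s : R, s ∉ P ∧ x * algebraMap R (FractionRing R) s = algebraMap R (FractionRing R) r}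

/-- The image of `R` in its quotient field. -/
def imageR : Set (FractionRing R) := Set.range (algebraMap R (FractionRing R))

/-- `R` is a `t#`-domain if `⋂_{M ∈ 𝔐₁} R_M ≠ ⋂_{M ∈ 𝔐₂} R_M` for any two distinct
subsets `𝔐₁, 𝔐₂` of `t-Max(R)`. -/
def IsTSharp : Prop :=
  ∀ 𝔐₁ 𝔐₂ : Set (Ideal R), 𝔐₁ ⊆ tMax R → 𝔐₂ ⊆ tMax R → 𝔐₁ ≠ 𝔐₂ →
    (⋂ M ∈ 𝔐₁, locSet R M) ≠ ⋂ M ∈ 𝔐₂, locSet R M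

/-- The conductor `(R :_R u) = {r ∈ R : r·u ∈ R}` of an element `u` of the quotient
field. -/
def colonIdeal (u : FractionRing R) : Ideal R :=
  Submodule.comap (Algebra.linearMap R (FractionRing R))
    (Submodule.comap (LinearMap.mulLeft R u) (1 : Submodule R (FractionRing R)))

/-- `R` is `v`-coherent if for each nonzero finitely generated ideal `I` of `R`,
`I⁻¹ = J_v` for some finitely generated fractional ideal `J`. -/
def IsVCoherent : Prop :=
  ∀ I : Ideal R, I ≠ ⊥ → I.FG →
    ∃ J : Submodule R (FractionRing R), J.FG ∧
      (1 : Submodule R (FractionRing R)) / idealSub R I = 1 / (1 / J)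

/-- An ideal is `v`-finite if it equals `J_v` for some finitely generated ideal `J`. -/
def IsVFinite (I : Ideal R) : Prop := ∃ J : Ideal R, J.FG ∧ I = vIdeal R J

/-- `Φ(Λ)`: the set of all integral `t`-ideals `I` of `R` with `I ⊄ P` for every
`P ∈ Λ`. -/
def Phi (Λ : Set (Ideal R)) : Set (Ideal R) :=
  {I | IsTIdeal R I ∧ ∀ P ∈ Λ, ¬ I ≤ P}

/-- `Φ(Λ)` is `v`-finite if every `t`-ideal in `Φ(Λ)` contains a `v`-finite `t`-ideal
belonging to `Φ(Λ)`. -/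
def PhiVFinite (Λ : Set (Ideal R)) : Prop :=
  ∀ I ∈ Phi R Λ, ∃ J ∈ Phi R Λ, J ≤ I ∧ IsVFinite R J

/-- The generalized ring of quotients `R_{Φ(Λ)} = {x ∈ K : xI ⊆ R for some I ∈ Φ(Λ)}`. -/
def RPhi (Λ : Set (Ideal R)) : Set (FractionRing R) :=
  {x | ∃ I ∈ Phi R Λ, ∀ a ∈ I, x * algebraMap R (FractionRing R) a ∈ imageR R}

/-- `Λ` is a set of pairwise incomparable `t`-primes of `R`. -/
def IncompTPrimes (Λ : Set (Ideal R)) : Prop :=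
  (∀ P ∈ Λ, IsTPrime R P) ∧ ∀ P ∈ Λ, ∀ Q ∈ Λ, P ≤ Q → P = Q

/-- `R` is a Prüfer `v`-multiplication domain if `R_M` is a valuation domain for every
maximal `t`-ideal `M` of `R`. -/
def IsPVMD [IsDomain R] : Prop :=
  ∀ M ∈ tMax R, ∀ x : FractionRing R, x ≠ 0 → x ∈ locSet R M ∨ x⁻¹ ∈ locSet R M

/-- `R` is a Mori domain: the ascending chain condition holds on integral divisorial
ideals. -/
def IsMori : Prop :=
  ∀ f : ℕ → Ideal R, (∀ n, IsDivisorialIdeal R (f n)) → (∀ n, f n ≤ f (n + 1)) →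
    ∃ n, ∀ m, n ≤ m → f m = f n

/-- The localization `T_Q` of a subring `T` of the quotient field of `R` at (the
complement of) an ideal `Q` of `T`, viewed as a subset of the quotient field of `R`. -/
def locSetSub (T : Subring (FractionRing R)) (Q : Ideal T) : Set (FractionRing R) :=
  {x | ∃ r s : T, s ∉ Q ∧ x * (s : FractionRing R) = (r : FractionRing R)}

/-- `T` is an overring of `R`: a subring of the quotient field containing (the image
of) `R`. -/
def IsOverring (T : Subring (FractionRing R)) : Prop :=
  ∀ r : R, algebraMap R (FractionRing R) r ∈ T

/-- The canonical ring homomorphism from `R` to an overring `T`; `M ∩ R` is the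
contraction `Ideal.comap (intoOverring R T h) M`. -/
def intoOverring (T : Subring (FractionRing R)) (h : IsOverring R T) : R →+* T :=
  (algebraMap R (FractionRing R)).codRestrict T h

/-- `T` is a `t`-flat overring of `R`: `T_M = R_{M ∩ R}` for each maximal `t`-ideal `M`
of `T`. -/
def IsTFlat (T : Subring (FractionRing R)) : Prop :=
  ∃ h : IsOverring R T, ∀ M ∈ tMax (↥T),
    locSetSub R T M = locSet R (Ideal.comap (intoOverring R T h) M)

/-- `T` is `t`-linked over `R`: for each nonzero finitely generated ideal `I` of `R` with
`(R : I) = R` one has `(T : IT) = T`. -/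
def IsTLinked (T : Subring (FractionRing R)) : Prop :=
  ∀ I : Ideal R, I ≠ ⊥ → I.FG →
    (1 : Submodule R (FractionRing R)) / idealSub R I = 1 →
    {x : FractionRing R | ∀ a ∈ I, x * algebraMap R (FractionRing R) a ∈ T} =
      (T : Set (FractionRing R))

/-- `T` is a `t`-subintersection of `R`: `T = ⋂_{P ∈ Λ} R_P` for some set `Λ` of
`t`-primes of `R`. -/
def IsTSubintersection (T : Subring (FractionRing R)) : Prop :=
  ∃ Λ : Set (Ideal R), (∀ P ∈ Λ, IsTPrime R P) ∧
    (T : Set (FractionRing R)) = ⋂ P ∈ Λ, locSet R P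

/-- `(P : P) = {x ∈ K : xP ⊆ P}`, as a subring of the quotient field of `R`. -/
def colonPP (P : Ideal R) : Subring (FractionRing R) where
  carrier := {x | ∀ a ∈ P, x * algebraMap R (FractionRing R) a ∈ idealSub R P}
  one_mem' := by
    intro a ha
    rw [one_mul]
    exact Submodule.mem_map_of_mem ha
  mul_mem' := by
    intro x y hx hy a ha
    rcases hy a ha with ⟨b, hb, hby⟩
    rw [mul_assoc, ← hby]
    exact hx b hb
  add_mem' := by
    intro x y hx hy a ha
    rw [add_mul]
    exact Submodule.add_mem _ (hx a ha) (hy a ha)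
  zero_mem' := by
    intro a ha
    rw [zero_mul]
    exact Submodule.zero_mem _
  neg_mem' := by
    intro x hx a ha
    rw [neg_mul]
    exact Submodule.neg_mem _ (hx a ha)

/-- `R` is a `t#_P`-domain: for sets `Λ₁ ≠ Λ₂` of `t`-primes such that `(P + Q)_t = R`
for distinct `P ∈ Λ₁`, `Q ∈ Λ₂`, one has `R_{Φ(Λ₁)} ≠ R_{Φ(Λ₂)}`. -/
def IsTSharpP : Prop :=
  ∀ Λ₁ Λ₂ : Set (Ideal R), (∀ P ∈ Λ₁, IsTPrime R P) → (∀ Q ∈ Λ₂, IsTPrime R Q) →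
    (∀ P ∈ Λ₁, ∀ Q ∈ Λ₂, P ≠ Q → tIdeal R (P ⊔ Q) = ⊤) →
    Λ₁ ≠ Λ₂ → RPhi R Λ₁ ≠ RPhi R Λ₂

/-- A `t`-localizing system of ideals of `R`: a set of integral `t`-ideals closed under
`t`-multiplication and satisfying the two localizing-system closure properties. -/
def IsTLocalizingSystem (Φ : Set (Ideal R)) : Prop :=
  (∀ I ∈ Φ, IsTIdeal R I) ∧
  (∀ I ∈ Φ, ∀ J ∈ Φ, tIdeal R (I * J) ∈ Φ) ∧
  (∀ I ∈ Φ, ∀ J : Ideal R, IsTIdeal R J → I ≤ J → J ∈ Φ) ∧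
  (∀ I ∈ Φ, ∀ J : Ideal R, IsTIdeal R J →
    (∀ a ∈ I, tIdeal R (Submodule.colon J (Ideal.span {a})) ∈ Φ) → J ∈ Φ)

/-- The ascending chain condition on `t`-primes of `R`. -/
def ACCTPrimes : Prop :=
  ∀ f : ℕ → Ideal R, (∀ n, IsTPrime R (f n)) → (∀ n, f n ≤ f (n + 1)) →
    ∃ n, ∀ m, n ≤ m → f m = f n

/-- The ascending chain condition on radical `t`-ideals of `R`. -/
def ACCRadicalTIdeals : Prop :=
  ∀ f : ℕ → Ideal R, (∀ n, IsTIdeal R (f n) ∧ (f n).radical = f n) →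
    (∀ n, f n ≤ f (n + 1)) → ∃ n, ∀ m, n ≤ m → f m = f n

/-- A prime `P` is branched if there is a `PR_P`-primary ideal of `R_P` different from
`PR_P` (the maximal ideal of `R_P`). -/
def IsBranched (P : Ideal R) (hP : P.IsPrime) : Prop :=
  letI := hP
  ∃ Q : Ideal (Localization.AtPrime P), Q.IsPrimary ∧
    Q ≠ IsLocalRing.maximalIdeal (Localization.AtPrime P)

/-- A prime ideal of a domain has height one. -/
def HeightOne (Q : Ideal R) : Prop :=
  Q ≠ ⊥ ∧ ∀ P : Ideal R, P.IsPrime → P < Q → P = ⊥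

/-- A nonzero integral ideal `I` is `t`-invertible: `(I I⁻¹)_t = R`. -/
def IsTInvertible (I : Ideal R) : Prop :=
  tIdeal R (Submodule.comap (Algebra.linearMap R (FractionRing R))
    (idealSub R I * ((1 : Submodule R (FractionRing R)) / idealSub R I))) = ⊤

variable {σ : Type*}

/-- An upper to zero: a prime ideal `Q` of `R[{X_α}]` with `Q ∩ R = 0`. -/
def IsUpperToZero (Q : Ideal (MvPolynomial σ R)) : Prop :=
  Q.IsPrime ∧ Ideal.comap (MvPolynomial.C : R →+* MvPolynomial σ R) Q = ⊥

/-- The content `c(f)` of a polynomial: the ideal of `R` generated by its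
coefficients. -/
def mvContent (f : MvPolynomial σ R) : Ideal R :=
  Ideal.span (Set.range fun m => MvPolynomial.coeff m f)

/-- The content `c(I)` of an ideal of `R[{X_α}]`: the ideal of `R` generated by the
coefficients of all polynomials in `I`. -/
def mvContentIdeal (Q : Ideal (MvPolynomial σ R)) : Ideal R :=
  Ideal.span {r | ∃ f ∈ Q, ∃ m, MvPolynomial.coeff m f = r}

/-- `R({X_α})`: the localization of `R[{X_α}]` at the (multiplicatively closed) set of
polynomials of unit content. -/
def mvNagata (σ : Type*) : Type _ :=
  Localization (Submonoid.closure {f : MvPolynomial σ R | mvContent R f = ⊤})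

instance (σ : Type*) : CommRing (mvNagata R σ) := by
  unfold mvNagata; infer_instance

/-- `R⟨{X_α}⟩`: the localization of `R[{X_α}]` at the (multiplicatively closed) set
`S = {f : c(f)_v = R}`. -/
def mvKronecker (σ : Type*) : Type _ :=
  Localization (Submonoid.closure {f : MvPolynomial σ R | vIdeal R (mvContent R f) = ⊤})

instance (σ : Type*) : CommRing (mvKronecker R σ) := by
  unfold mvKronecker; infer_instance


lemma le_vIdeal {R : Type*} [CommRing R] (I : Ideal R) : I ≤ vIdeal R I := by
  intro x hx
  simp only [vIdeal, Submodule.mem_comap, Submodule.mem_div_iff_forall_mul_mem]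
  intro y hy
  rw [mul_comm]
  exact hy _ (Submodule.mem_map_of_mem hx)

lemma vIdeal_mono {R : Type*} [CommRing R] {I J : Ideal R} (h : I ≤ J) :
    vIdeal R I ≤ vIdeal R J := by
  intro x hx
  simp only [vIdeal, Submodule.mem_comap, Submodule.mem_div_iff_forall_mul_mem] at hx ⊢
  exact fun y hy => hx y fun z hz => hy z (Submodule.map_mono h hz)

/-- A `t`-ideal contains the divisorial closure of each of its finitely generated subideals. -/
lemma vIdeal_le_of_le_tIdeal {R : Type*} [CommRing R] {I J : Ideal R} (hI : IsTIdeal R I)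
    (hJ : J.FG) (hle : J ≤ I) : vIdeal R J ≤ I := by
  obtain ⟨a, ha, ha0⟩ := Submodule.exists_mem_ne_zero_of_ne_bot hI.1
  -- `J` may be `⊥`, so it is enlarged by a nonzero element of `I`.
  have hfg : (J ⊔ Ideal.span {a}).FG := Submodule.FG.sup hJ (Submodule.fg_span_singleton a)
  have hne : J ⊔ Ideal.span {a} ≠ ⊥ := by
    intro h
    exact ha0 (Ideal.span_singleton_eq_bot.1 (le_bot_iff.1 (h ▸ le_sup_right)))
  have hle' : J ⊔ Ideal.span {a} ≤ I :=
    sup_le hle ((Ideal.span_singleton_le_iff_mem I).2 ha)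
  calc vIdeal R J ≤ vIdeal R (J ⊔ Ideal.span {a}) := vIdeal_mono le_sup_left
    _ ≤ tIdeal R I := le_iSup₂_of_le _ hfg (le_iSup₂_of_le hne hle' le_rfl)
    _ = I := hI.2

lemma tIdeal_mono {R : Type*} [CommRing R] {I J : Ideal R} (h : I ≤ J) :
    tIdeal R I ≤ tIdeal R J :=
  iSup₂_le fun A hA => iSup₂_le fun h0 hle =>
    le_iSup₂_of_le A hA (le_iSup₂_of_le h0 (hle.trans h) le_rfl)

lemma vIdeal_span_singleton {R : Type*} [CommRing R] [IsDomain R] {a : R} (ha : a ≠ 0) :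
    vIdeal R (Ideal.span {a}) = Ideal.span {a} := by
  have ha' : algebraMap R (FractionRing R) a ≠ 0 := by simpa using ha
  apply le_antisymm
  · intro x hx
    simp only [vIdeal, Submodule.mem_comap, Submodule.mem_div_iff_forall_mul_mem] at hx
    have h1 : algebraMap R (FractionRing R) x * (algebraMap R (FractionRing R) a)⁻¹ ∈
        (1 : Submodule R (FractionRing R)) := by
      refine hx _ ?_
      rintro z ⟨w, hw, rfl⟩
      obtain ⟨c, rfl⟩ := Ideal.mem_span_singleton'.1 hw
      refine Submodule.mem_one.2 ⟨c, ?_⟩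
      simp only [Algebra.linearMap_apply, map_mul]
      field_simp
    obtain ⟨c, hc⟩ := Submodule.mem_one.1 h1
    refine Ideal.mem_span_singleton'.2 ⟨c, IsFractionRing.injective R (FractionRing R) ?_⟩
    rw [map_mul, hc]
    field_simp
  · exact le_vIdeal _

lemma isTIdeal_span_singleton {R : Type*} [CommRing R] [IsDomain R] {a : R} (ha : a ≠ 0) :
    IsTIdeal R (Ideal.span {a}) := by
  have h0 : Ideal.span {a} ≠ ⊥ := mt Ideal.span_singleton_eq_bot.1 ha
  refine ⟨h0, le_antisymm ?_ ?_⟩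
  · refine iSup₂_le fun A _ => iSup₂_le fun _ hle => ?_
    exact (vIdeal_mono hle).trans (vIdeal_span_singleton ha).le
  · exact le_iSup₂_of_le _ (Submodule.fg_span_singleton a)
      (le_iSup₂_of_le h0 le_rfl (vIdeal_span_singleton ha).ge)

/-- `Φ(∅)` consists of all `t`-ideals, and each of them contains a nonzero principal ideal. -/
lemma phiVFinite_empty {R : Type*} [CommRing R] [IsDomain R] : PhiVFinite R ∅ := by
  rintro I ⟨hI, -⟩
  obtain ⟨a, ha, ha0⟩ := Submodule.exists_mem_ne_zero_of_ne_bot hI.1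
  exact ⟨Ideal.span {a}, ⟨isTIdeal_span_singleton ha0, by simp⟩,
    (Ideal.span_singleton_le_iff_mem I).2 ha,
    Ideal.span {a}, Submodule.fg_span_singleton a, (vIdeal_span_singleton ha0).symm⟩

/-- A finitely generated ideal inside the union of a chain lies in some member of the chain. -/
lemma exists_le_of_fg_le_iSup {R : Type*} [CommRing R] {f : ℕ → Ideal R} (hf : Monotone f)
    {A : Ideal R} (hA : A.FG) (hle : A ≤ ⨆ n, f n) : ∃ n, A ≤ f n :=
  by
  obtain ⟨_, ⟨n, rfl⟩, hn⟩ := ((Submodule.fg_iff_compact A).1 hA) _ _ (Set.range_nonempty f)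
    hf.directed_le.directedOn_range (isLUB_iSup (f := f)) hle
  exact ⟨n, hn⟩

lemma isTIdeal_iSup {R : Type*} [CommRing R] {f : ℕ → Ideal R} (hf : Monotone f)
    (ht : ∀ n, IsTIdeal R (f n)) : IsTIdeal R (⨆ n, f n) := by
  refine ⟨fun h => (ht 0).1 (le_bot_iff.1 (h ▸ le_iSup f 0)), le_antisymm ?_ ?_⟩
  · refine iSup₂_le fun A hA => iSup₂_le fun _ hle => ?_
    obtain ⟨n, hn⟩ := exists_le_of_fg_le_iSup hf hA hle
    exact (vIdeal_le_of_le_tIdeal (ht n) hA hn).trans (le_iSup f n)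
  · exact iSup_le fun n => (ht n).2.ge.trans (tIdeal_mono (le_iSup f n))

/-- A chain of `t`-primes that did not stabilize would have its union in `Φ` of the chain, without
any `v`-finite member of `Φ` below it. -/
lemma acc_of_phiVFinite {R : Type*} [CommRing R]
    (h : ∀ Λ : Set (Ideal R), Λ.Nonempty → (∀ P ∈ Λ, IsTPrime R P) → PhiVFinite R Λ) :
    ACCTPrimes R := by
  intro f hf hmono
  have hm : Monotone f := monotone_nat_of_le_succ hmono
  by_contra hcon
  have hnot : ∀ n, ¬ (⨆ k, f k) ≤ f n := fun n hn =>
    hcon ⟨n, fun m hnm => le_antisymm ((le_iSup f m).trans hn) (hm hnm)⟩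
  obtain ⟨J, hJ, hJle, A, hA, rfl⟩ :=
    h (Set.range f) (Set.range_nonempty f) (Set.forall_mem_range.2 hf) (⨆ k, f k)
      ⟨isTIdeal_iSup hm fun n => (hf n).2, Set.forall_mem_range.2 hnot⟩
  obtain ⟨n, hn⟩ := exists_le_of_fg_le_iSup hm hA ((le_vIdeal A).trans hJle)
  exact hJ.2 (f n) ⟨n, rfl⟩ (vIdeal_le_of_le_tIdeal (hf n).2 hA hn)

lemma exists_maximal_ge {R : Type*} [CommRing R] (hacc : ACCTPrimes R) {Λ : Set (Ideal R)}
    (hΛ : ∀ P ∈ Λ, IsTPrime R P) {P : Ideal R} (hP : P ∈ Λ) :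
    ∃ Q, P ≤ Q ∧ Maximal (· ∈ Λ) Q := by
  have hwf : WellFoundedGT Λ := by
    rw [wellFoundedGT_iff_monotone_chain_condition]
    intro g
    obtain ⟨n, hn⟩ := hacc (fun k => (g k : Ideal R)) (fun k => hΛ _ (g k).2)
      (fun k => g.monotone k.le_succ)
    exact ⟨n, fun m hm => Subtype.ext (hn m hm).symm⟩
  obtain ⟨Q, hPQ, hQ⟩ := hwf.wf.has_min {Q : Λ | P ≤ Q} ⟨⟨P, hP⟩, le_refl P⟩
  refine ⟨Q, hPQ, Q.2, fun S hS hle => ?_⟩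
  by_contra hSQ
  exact hQ ⟨S, hS⟩ (le_trans (show P ≤ (Q : Ideal R) from hPQ) hle) (lt_of_le_not_ge hle hSQ)

/-- **Proposition (2.12).**  For a `v`-coherent integral domain `R` the following are
equivalent: (1) `Φ(Λ)` is `v`-finite for each nonempty set `Λ` of `t`-primes of `R`;
(2) `R` satisfies the ascending chain condition on `t`-primes and `Φ(Λ)` is `v`-finite
for each set `Λ` of pairwise incomparable `t`-primes of `R`. -/
theorem phi_vFinite_iff_acc (R : Type*) [CommRing R] [IsDomain R]
    (hvc : IsVCoherent R) :
    (∀ Λ : Set (Ideal R), Λ.Nonempty → (∀ P ∈ Λ, IsTPrime R P) → PhiVFinite R Λ) ↔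
      (ACCTPrimes R ∧ ∀ Λ : Set (Ideal R), IncompTPrimes R Λ → PhiVFinite R Λ) := by
  constructor
  · intro h
    refine ⟨acc_of_phiVFinite h, fun Λ hΛ => ?_⟩
    rcases Λ.eq_empty_or_nonempty with rfl | hne
    · exact phiVFinite_empty
    · exact h Λ hne hΛ.1
  · rintro ⟨hacc, h⟩ Λ - hΛ
    have hinc : IncompTPrimes R {Q | Maximal (· ∈ Λ) Q} :=
      ⟨fun P hP => hΛ P hP.prop, fun P hP Q hQ hle => hP.eq_of_le hQ.prop hle⟩
    have hPhi : Phi R {Q | Maximal (· ∈ Λ) Q} = Phi R Λ := by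
      ext I
      refine and_congr_right fun _ => ⟨fun hI P hP hle => ?_, fun hI P hP => hI P hP.prop⟩
      obtain ⟨Q, hPQ, hQ⟩ := exists_maximal_ge hacc hΛ hP
      exact hI Q hQ (hle.trans hPQ)
    have := h _ hinc
    unfold PhiVFinite at this ⊢
    rwa [hPhi] at this

end TSharpPaper
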